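/- Let p ≡ 3 (mod 4) be a prime and r ≥ 1 an integer. Then the sum over k from 0 to p^{2r}-1 of ((1/2)_k)^3/(k!)^3 is congruent to p^{2r} · (3/4)_{(p^{2r}-1)/2}/(5/4)_{(p^{2r}-1)/2} modulo p^{2r+2}. -/

import Mathlib

open Finset

/-- The rising factorial (Pochhammer symbol) `(a)_k = a(a+1)⋯(a+k-1)` for `a : ℚ`. -/
def risingFactorial (a : ℚ) (k : ℕ) : ℚ := ∏ i ∈ Finset.range k, (a + i)

/-
Write `N = p ^ (2r) = 2m + 1`. Since `(1/2)_k² = ∏_{j<k} v_j` with nodes `v_j = (j + 1/2)²`, the sum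
is the value at `0` of a polynomial in Newton form of degree less than `N`. Lagrange interpolation
at the same nodes rewrites it as a sum over `l < N` of terminating `₃F₂(1)` series times explicit
weights; these series vanish for odd `l` and equal `((1/2)_t / t!)²` for `l = 2t`.

The central term `t = m / 2` matches the right-hand side up to a principal unit modulo `p²`, because
both are products of factors `1 - y²` with `p ∣ y`, and `((1/2)_t / t!)²` supplies a factor `N`.
Up to a factor divisible by `N`, the other terms are `C(m, t)² / (4t + 1)` times a correction
`≡ 1 (mod p)`. Their sum vanishes modulo `p²`. Indeed the principal parts cancel under `t ↦ m - t`.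
Cut the range into blocks of length `M = p ^ (2r - 1)`: on the first half of a block the correction
is constant modulo `p²` and the principal parts cancel modulo `p` under reflection of that half, on
the second half the principal part is already divisible by `p`. As `p ≡ 3 (mod 4)`, there are enough
carries in `t + (m - t)` for Kummer's formula to compensate for the denominators `4t + 1`.
-/

section Padic

variable {p : ℕ} [Fact p.Prime] {n k : ℕ} {x y : ℚ}

/-- The fractional ideal `p ^ n ℤ₍ₚ₎` of rationals of `p`-adic valuation at least `n`; membership
of a difference is congruence modulo `p ^ n`. -/
def padicIdeal (p : ℕ) [Fact p.Prime] (n : ℕ) : AddSubgroup ℚ :=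
  (Rat.padicValuation p).leAddSubgroup (WithZero.exp (-(n : ℤ)))

lemma mem_padicIdeal : x ∈ padicIdeal p n ↔ Rat.padicValuation p x ≤ WithZero.exp (-(n : ℤ)) :=
  Iff.rfl

lemma mem_padicIdeal_zero : x ∈ padicIdeal p 0 ↔ Rat.padicValuation p x ≤ 1 := by
  simp [mem_padicIdeal]

lemma padicIdeal_antitone : Antitone (padicIdeal p) := fun _ _ h =>
  Valuation.leAddSubgroup_monotone _ (WithZero.exp_le_exp.mpr (by simpa using h))

lemma intCast_mem_padicIdeal_zero (z : ℤ) : (z : ℚ) ∈ padicIdeal p 0 := by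
  rw [mem_padicIdeal_zero, Rat.padicValuation_cast]
  exact Int.padicValuation_le_one p z

lemma natCast_mem_padicIdeal_zero (a : ℕ) : (a : ℚ) ∈ padicIdeal p 0 :=
  intCast_mem_padicIdeal_zero a

lemma mul_mem_padicIdeal (hx : x ∈ padicIdeal p n) (hy : y ∈ padicIdeal p k) :
    x * y ∈ padicIdeal p (n + k) := by
  rw [mem_padicIdeal] at *
  rw [map_mul, Nat.cast_add, neg_add, WithZero.exp_add]
  exact mul_le_mul' hx hy

lemma prime_pow_mem_padicIdeal (n : ℕ) : (p : ℚ) ^ n ∈ padicIdeal p n := by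
  rw [mem_padicIdeal, map_pow, Rat.padicValuation_self, ← WithZero.exp_nsmul]
  simp

lemma natCast_mem_padicIdeal {a : ℕ} (h : p ^ n ∣ a) : (a : ℚ) ∈ padicIdeal p n := by
  obtain ⟨c, rfl⟩ := h
  push_cast
  exact mul_mem_padicIdeal (prime_pow_mem_padicIdeal n) (natCast_mem_padicIdeal_zero c)

lemma intCast_mul_mem_padicIdeal_iff {z : ℤ} (hz : ¬ (p : ℤ) ∣ z) :
    z * x ∈ padicIdeal p n ↔ x ∈ padicIdeal p n := by
  rw [mem_padicIdeal, mem_padicIdeal, map_mul, Rat.padicValuation_cast,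
    Int.padicValuation_eq_one_iff.mpr hz, one_mul]

lemma div_mem_padicIdeal_of_not_dvd {a j : ℕ} (hx : x ∈ padicIdeal p (n + a))
    (hj : ¬ p ^ (a + 1) ∣ j) : x / j ∈ padicIdeal p n := by
  have hp := Fact.out (p := p.Prime)
  have hj0 : j ≠ 0 := by rintro rfl; exact hj (dvd_zero _)
  obtain ⟨c, q, hq, rfl⟩ := Nat.exists_eq_pow_mul_and_not_dvd hj0 p hp.ne_one
  have hca : c ≤ a := by
    by_contra hlt
    exact hj ((pow_dvd_pow p (by omega)).mul_right q)
  have hval : Rat.padicValuation p ((p ^ c * q : ℕ) : ℚ) = WithZero.exp (-(c : ℤ)) := by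
    have hq1 : Rat.padicValuation p (q : ℚ) = 1 :=
      (Rat.padicValuation_cast p q).trans
        (Int.padicValuation_eq_one_iff.mpr (by exact_mod_cast hq))
    push_cast
    rw [map_mul, map_pow, Rat.padicValuation_self, hq1, ← WithZero.exp_nsmul]
    simp
  rw [mem_padicIdeal] at *
  rw [map_div₀, hval, div_le_iff₀ (WithZero.exp_pos), ← WithZero.exp_add]
  exact hx.trans (WithZero.exp_le_exp.mpr (by push_cast; omega))

lemma exists_int_mul_eq_of_mem_padicIdeal (hx : x ∈ padicIdeal p n) :
    ∃ a b : ℤ, ¬ (p : ℤ) ∣ b ∧ x * b = (p : ℚ) ^ n * a := by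
  have hp : (p : ℚ) ≠ 0 := mod_cast (Fact.out (p := p.Prime)).ne_zero
  have hy : Rat.padicValuation p (x / p ^ n) ≤ 1 := by
    rw [map_div₀, map_pow, Rat.padicValuation_self, ← WithZero.exp_nsmul]
    exact div_le_one_of_le₀ (by simpa [mem_padicIdeal] using hx) zero_le
  refine ⟨(x / p ^ n).num, (x / p ^ n).den, ?_, ?_⟩
  · exact_mod_cast Rat.padicValuation_le_one_iff.mp hy
  · rw [← Rat.mul_den_eq_num]
    push_cast
    field_simp

lemma sum_mem_padicIdeal_of_involution {ι : Type*} {s : Finset ι} {f : ι → ℚ} {σ : ι → ι}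
    (hp : p ≠ 2) (hσ : ∀ i ∈ s, σ i ∈ s) (hσσ : ∀ i ∈ s, σ (σ i) = i)
    (hf : ∀ i ∈ s, f i + f (σ i) ∈ padicIdeal p n) : ∑ i ∈ s, f i ∈ padicIdeal p n := by
  have hodd : ¬ (p : ℤ) ∣ 2 := by
    exact_mod_cast mt (Nat.prime_dvd_prime_iff_eq Fact.out Nat.prime_two).mp hp
  have hsum : ∑ i ∈ s, f i = ∑ i ∈ s, f (σ i) :=
    sum_nbij' σ σ hσ hσ hσσ hσσ fun i hi => by rw [hσσ i hi]
  rw [← intCast_mul_mem_padicIdeal_iff hodd, Int.cast_ofNat, two_mul]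
  nth_rw 2 [hsum]
  rw [← sum_add_distrib]
  exact sum_mem hf

lemma mem_padicIdeal_zero_of_sub_one_mem (hx : x - 1 ∈ padicIdeal p n) : x ∈ padicIdeal p 0 := by
  simpa using add_mem (padicIdeal_antitone n.zero_le hx) (natCast_mem_padicIdeal_zero 1)

/-- The monoid `1 + p ^ n ℤ₍ₚ₎` of rationals congruent to `1` modulo `p ^ n`. -/
def principalUnits (p : ℕ) [Fact p.Prime] (n : ℕ) : Submonoid ℚ where
  carrier := {x | x - 1 ∈ padicIdeal p n}
  one_mem' := by simp
  mul_mem' {x y} hx hy := by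
    have hsplit : x * y - 1 = (x - 1) * y + (y - 1) := by ring
    rw [Set.mem_ofPred_eq, hsplit]
    exact add_mem (mul_mem_padicIdeal hx (mem_padicIdeal_zero_of_sub_one_mem hy)) hy

lemma mem_principalUnits : x ∈ principalUnits p n ↔ x - 1 ∈ padicIdeal p n := Iff.rfl

lemma one_add_mem_principalUnits : 1 + x ∈ principalUnits p n ↔ x ∈ padicIdeal p n := by
  rw [mem_principalUnits, add_sub_cancel_left]

lemma padicValuation_eq_one_of_mem_principalUnits (hn : n ≠ 0) (hx : x ∈ principalUnits p n) :
    Rat.padicValuation p x = 1 := by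
  have hlt : Rat.padicValuation p (x - 1) < 1 := by
    refine lt_of_le_of_lt hx ?_
    rw [← WithZero.exp_zero, WithZero.exp_lt_exp]
    omega
  simpa using Valuation.map_one_add_of_lt _ hlt

lemma ne_zero_of_mem_principalUnits (hn : n ≠ 0) (hx : x ∈ principalUnits p n) : x ≠ 0 := by
  rintro rfl
  simpa using padicValuation_eq_one_of_mem_principalUnits hn hx

lemma inv_mem_principalUnits (hn : n ≠ 0) (hx : x ∈ principalUnits p n) :
    x⁻¹ ∈ principalUnits p n := by
  have hsplit : x⁻¹ - 1 = -((x - 1) * x⁻¹) := by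
    have := ne_zero_of_mem_principalUnits hn hx
    field_simp
    ring
  have hinv : x⁻¹ ∈ padicIdeal p 0 := by
    rw [mem_padicIdeal_zero, map_inv₀, padicValuation_eq_one_of_mem_principalUnits hn hx, inv_one]
  rw [mem_principalUnits, hsplit]
  exact neg_mem (mul_mem_padicIdeal hx hinv)

lemma div_mem_principalUnits (hn : n ≠ 0) (hx : x ∈ principalUnits p n)
    (hy : y ∈ principalUnits p n) : x / y ∈ principalUnits p n := by
  rw [div_eq_mul_inv]
  exact mul_mem hx (inv_mem_principalUnits hn hy)

end Padic

section RisingFactorial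

lemma risingFactorial_succ (a : ℚ) (n : ℕ) :
    risingFactorial a (n + 1) = risingFactorial a n * (a + n) :=
  prod_range_succ _ n

lemma risingFactorial_add (a : ℚ) (k n : ℕ) :
    risingFactorial a (k + n) = risingFactorial a k * risingFactorial (a + k) n := by
  simp only [risingFactorial, prod_range_add, Nat.cast_add, add_assoc]

lemma risingFactorial_one (n : ℕ) : risingFactorial 1 n = n.factorial := by
  rw [← prod_range_add_one_eq_factorial, Nat.cast_prod]
  exact prod_congr rfl fun i _ => by push_cast; ring

lemma risingFactorial_reflect (a : ℚ) (n : ℕ) :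
    risingFactorial a n = (-1) ^ n * risingFactorial (1 - n - a) n := by
  simp only [risingFactorial]
  rw [← prod_range_reflect, ← card_range n, ← prod_const, card_range, ← prod_mul_distrib]
  refine prod_congr rfl fun i hi => ?_
  have hi' : i + 1 ≤ n := mem_range.mp hi
  rw [Nat.sub_sub, add_comm 1 i, Nat.cast_sub hi']
  push_cast
  ring

lemma risingFactorial_add_two (a : ℚ) (k : ℕ) :
    risingFactorial (a + 2) k * (a * (a + 1)) =
      risingFactorial a k * ((a + k) * (a + k + 1)) := by
  have h := risingFactorial_add a 2 k
  rw [add_comm 2 k, risingFactorial_succ, risingFactorial_succ] at h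
  simp only [risingFactorial, prod_range_succ, prod_range_zero] at h ⊢
  push_cast at h
  linear_combination -h

lemma cast_choose_eq_risingFactorial (n k : ℕ) :
    (n.choose k : ℚ) = (-1) ^ k * risingFactorial (-n) k / k.factorial := by
  have hdesc : (n.descFactorial k : ℚ) = (-1) ^ k * risingFactorial (-n) k := by
    rw [← descPochhammer_eval_eq_descFactorial, descPochhammer_eval_eq_prod_range,
      risingFactorial, ← card_range k, ← prod_const, card_range, ← prod_mul_distrib]
    exact prod_congr rfl fun i _ => by ring
  rw [← hdesc, Nat.descFactorial_eq_factorial_mul_choose, Nat.cast_mul,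
    mul_div_cancel_left₀ _ (mod_cast k.factorial_ne_zero)]

lemma risingFactorial_half (n : ℕ) :
    risingFactorial (1 / 2) n = n.factorial * n.centralBinom / 4 ^ n := by
  induction n with
  | zero => simp [risingFactorial]
  | succ n ih =>
    have h : ((n : ℚ) + 1) * (n + 1).centralBinom = 2 * (2 * n + 1) * n.centralBinom := by
      exact_mod_cast Nat.succ_mul_centralBinom_succ n
    rw [risingFactorial_succ, ih, Nat.factorial_succ, pow_succ]
    push_cast
    field_simp
    linear_combination -2 * h

/-- The ratio `(a + x)_n / (a)_n`, written as a product so that it is visibly close to `1` when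
`x` is `p`-adically small compared with every `a + i`. -/
def shiftRatio (a x : ℚ) (n : ℕ) : ℚ := ∏ i ∈ range n, (1 + x / (a + i))

lemma risingFactorial_add_left {a : ℚ} (ha : 0 < a) (x : ℚ) (n : ℕ) :
    risingFactorial (a + x) n = risingFactorial a n * shiftRatio a x n := by
  rw [shiftRatio, risingFactorial, risingFactorial, ← prod_mul_distrib]
  refine prod_congr rfl fun i _ => ?_
  have : a + i ≠ 0 := by positivity
  field_simp
  ring

lemma shiftRatio_add (a x : ℚ) (k n : ℕ) :
    shiftRatio a x (k + n) = shiftRatio a x k * shiftRatio (a + k) x n := by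
  simp only [shiftRatio, prod_range_add, Nat.cast_add, add_assoc]

lemma cast_choose_eq_shiftRatio_one (n k : ℕ) :
    (n.choose k : ℚ) = (-1) ^ k * shiftRatio 1 (-(n + 1)) k := by
  have h := risingFactorial_add_left one_pos (-((n : ℚ) + 1)) k
  rw [show (1 : ℚ) + -(n + 1) = -n by ring, risingFactorial_one] at h
  rw [cast_choose_eq_risingFactorial, h, mul_div_assoc,
    mul_div_cancel_left₀ _ (mod_cast k.factorial_ne_zero)]

lemma cast_choose_eq_shiftRatio_half (n k : ℕ) :
    (n.choose k : ℚ) = (-1) ^ k * (risingFactorial (1 / 2) k / k.factorial) *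
      shiftRatio (1 / 2) (-(2 * n + 1) / 2) k := by
  have h := risingFactorial_add_left one_half_pos (-(2 * (n : ℚ) + 1) / 2) k
  rw [show (1 : ℚ) / 2 + -(2 * n + 1) / 2 = -n by ring] at h
  rw [cast_choose_eq_risingFactorial, h]
  ring

lemma cast_factorial_add (a b : ℕ) :
    ((a + b).factorial : ℚ) = a.factorial * b.factorial * shiftRatio 1 a b := by
  rw [← risingFactorial_one, risingFactorial_add, risingFactorial_add_left one_pos,
    risingFactorial_one, risingFactorial_one, mul_assoc]

variable {p : ℕ} [Fact p.Prime] {a x : ℚ} {n k : ℕ}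

lemma shiftRatio_mem_principalUnits (h : ∀ i < n, x / (a + i) ∈ padicIdeal p k) :
    shiftRatio a x n ∈ principalUnits p k :=
  prod_mem fun i hi => one_add_mem_principalUnits.mpr (h i (mem_range.mp hi))

-- The first-order terms of `(1 + y) * (1 - y) = 1 - y ^ 2` cancel, which doubles the precision.
lemma shiftRatio_mul_shiftRatio_neg_mem_principalUnits
    (h : ∀ i < n, x / (a + i) ∈ padicIdeal p k) :
    shiftRatio a x n * shiftRatio a (-x) n ∈ principalUnits p (k + k) := by
  rw [shiftRatio, shiftRatio, ← prod_mul_distrib]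
  refine prod_mem fun i hi => ?_
  have hi := h i (mem_range.mp hi)
  rw [show (1 + x / (a + i)) * (1 + -x / (a + i)) = 1 + -(x / (a + i) * (x / (a + i))) by ring,
    one_add_mem_principalUnits]
  exact neg_mem (mul_mem_padicIdeal hi hi)

end RisingFactorial

section Interpolation

open Polynomial in
lemma degree_sum_newton_lt {K : Type*} [Field K] (v c : ℕ → K) (N : ℕ) :
    (∑ k ∈ range N, C (c k) * ∏ i ∈ range k, (C (v i) - X)).degree < N := by
  refine (degree_sum_le _ _).trans_lt ((Finset.sup_lt_iff (WithBot.bot_lt_coe N)).mpr ?_)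
  intro k hk
  have hlin (i : ℕ) : (C (v i) - X).degree ≤ 1 :=
    (degree_sub_le _ _).trans (max_le (degree_C_le.trans zero_le_one) degree_X_le)
  calc (C (c k) * ∏ i ∈ range k, (C (v i) - X)).degree
      ≤ 0 + ∑ i ∈ range k, (C (v i) - X).degree :=
        (degree_mul_le _ _).trans (add_le_add degree_C_le (degree_prod_le _ _))
    _ ≤ k := by
        rw [zero_add]
        exact (sum_le_card_nsmul _ _ 1 fun i _ => hlin i).trans (by simp)
    _ < N := Nat.cast_lt.mpr (mem_range.mp hk)

-- Lagrange interpolation, evaluated at `0`, of the polynomial `∑ c k * ∏ i < k, (v i - X)`.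
open Polynomial in
lemma sum_newton_eq_sum_lagrange {K : Type*} [Field K] {v : ℕ → K} (hv : Function.Injective v)
    (c : ℕ → K) (N : ℕ) :
    ∑ k ∈ range N, c k * ∏ i ∈ range k, v i =
      ∑ l ∈ range N, (∑ k ∈ range N, c k * ∏ i ∈ range k, (v i - v l)) *
        ∏ j ∈ (range N).erase l, v j / (v j - v l) := by
  set P : K[X] := ∑ k ∈ range N, C (c k) * ∏ i ∈ range k, (C (v i) - X)
  have heval (x : K) : P.eval x = ∑ k ∈ range N, c k * ∏ i ∈ range k, (v i - x) := by
    simp [P, eval_finsetSum, eval_prod]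
  have hbasis (l : ℕ) : (Lagrange.basis (range N) v l).eval 0 =
      ∏ j ∈ (range N).erase l, v j / (v j - v l) := by
    rw [Lagrange.basis, eval_prod]
    refine prod_congr rfl fun j _ => ?_
    rw [Lagrange.basisDivisor, eval_mul, eval_C, eval_sub, eval_X, eval_C, zero_sub,
      inv_mul_eq_div, ← neg_sub (v j), div_neg, neg_div, neg_neg]
  have hdeg : P.degree < #(range N) := by
    rw [card_range]
    exact degree_sum_newton_lt v c N
  have h := congrArg (eval 0) (Lagrange.eq_interpolate hv.injOn hdeg)
  simpa only [Lagrange.interpolate_apply, eval_finsetSum, eval_mul, eval_C, hbasis, heval, sub_zero]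
    using h

/-- The interpolation nodes `(j + 1/2)²`: products of differences of nodes are rising factorials,
and `0` is the point at which the truncated series is recovered. -/
def node (j : ℕ) : ℚ := ((j : ℚ) + 1 / 2) ^ 2

lemma node_sub_node (j l : ℕ) : node j - node l = (j - l) * (j + l + 1) := by
  unfold node
  ring

lemma node_injective : Function.Injective node := by
  intro j l h
  have h' : ((j : ℚ) - l) * (j + l + 1) = 0 := by rw [← node_sub_node, h, sub_self]
  have hpos : (j : ℚ) + l + 1 ≠ 0 := by positivity
  exact_mod_cast sub_eq_zero.mp ((mul_eq_zero.mp h').resolve_right hpos)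

/-- The value at `0` of the `l`-th Lagrange basis polynomial for the first `N` nodes. -/
def nodeWeight (N l : ℕ) : ℚ := ∏ j ∈ (range N).erase l, node j / (node j - node l)

lemma prod_node (n : ℕ) : ∏ i ∈ range n, node i = risingFactorial (1 / 2) n ^ 2 := by
  rw [risingFactorial, ← prod_pow]
  exact prod_congr rfl fun i _ => by rw [node, add_comm]

lemma prod_node_sub_node (k l : ℕ) : ∏ i ∈ range k, (node i - node l) =
    risingFactorial (-l) k * risingFactorial (l + 1) k := by
  rw [risingFactorial, risingFactorial, ← prod_mul_distrib]
  exact prod_congr rfl fun i _ => by rw [node_sub_node]; ring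

lemma nodeWeight_self_succ (l : ℕ) : nodeWeight (l + 1) l =
    4 * risingFactorial (1 / 2) (l + 1) ^ 2 * (-1) ^ l / ((2 * l + 1) * (2 * l + 1).factorial) := by
  have herase : (range (l + 1)).erase l = range l := by
    rw [range_add_one, erase_insert notMem_range_self]
  have hprod : ∏ i ∈ range l, (node i - node l) = (-1) ^ l * (2 * l).factorial := by
    rw [prod_node_sub_node, risingFactorial_reflect, two_mul, ← risingFactorial_one,
      risingFactorial_add, mul_assoc]
    ring_nf
  have hsign : ((-1 : ℚ) ^ l) ^ 2 = 1 := by rw [← pow_mul, mul_comm, pow_mul]; simp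
  have hfact : ((2 * l).factorial : ℚ) ≠ 0 := mod_cast Nat.factorial_ne_zero _
  rw [nodeWeight, herase, prod_div_distrib, hprod, prod_node, risingFactorial_succ,
    Nat.factorial_succ]
  push_cast
  field_simp
  linear_combination -4 * risingFactorial (1 / 2) l ^ 2 * (2 * l + 1) ^ 2 * hsign

lemma nodeWeight_eq_factorial (l s : ℕ) : nodeWeight (l + 1 + s) l =
    4 * risingFactorial (1 / 2) (l + 1 + s) ^ 2 * (-1) ^ l /
      ((2 * l + 1) * s.factorial * (2 * l + 1 + s).factorial) := by
  induction s with
  | zero => simpa using nodeWeight_self_succ l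
  | succ s ih =>
    have herase : (range (l + 1 + s + 1)).erase l =
        insert (l + 1 + s) ((range (l + 1 + s)).erase l) := by
      rw [range_add_one, erase_insert_of_ne (by omega)]
    have : 2 * (l : ℚ) + 1 + s + 1 ≠ 0 := by positivity
    have hnode : node (l + 1 + s) - node l = (s + 1) * (2 * l + 1 + s + 1) := by
      rw [node_sub_node]; push_cast; ring
    have hstep : nodeWeight (l + 1 + s + 1) l =
        node (l + 1 + s) / (node (l + 1 + s) - node l) * nodeWeight (l + 1 + s) l := by
      rw [nodeWeight, herase, prod_insert (by simp), nodeWeight]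
    rw [← add_assoc, ← add_assoc, hstep, ih, hnode, node, risingFactorial_succ,
      Nat.factorial_succ, Nat.factorial_succ]
    push_cast
    field_simp
    ring

lemma four_mul_risingFactorial_half_sq {N : ℕ} (hN : N ≠ 0) :
    4 * risingFactorial (1 / 2) N ^ 2 / (2 * N - 1).factorial =
      8 * N * N.centralBinom / 16 ^ N := by
  have hfact : (2 * N : ℚ) * (2 * N - 1).factorial = N.centralBinom * N.factorial ^ 2 := by
    have h1 := Nat.mul_factorial_pred (n := 2 * N) (by omega)
    have h2 := Nat.choose_mul_factorial_mul_factorial (n := 2 * N) (k := N) (by omega)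
    rw [show 2 * N - N = N by omega, ← Nat.centralBinom_eq_two_mul_choose, ← h1] at h2
    rw [sq, ← mul_assoc]
    exact_mod_cast h2.symm
  have hne : ((2 * N - 1).factorial : ℚ) ≠ 0 := mod_cast Nat.factorial_ne_zero _
  rw [risingFactorial_half, show (16 : ℚ) = 4 * 4 by norm_num, mul_pow]
  field_simp
  linear_combination -4 * N.centralBinom * hfact

lemma nodeWeight_eq_choose {N l : ℕ} (hl : l < N) : nodeWeight N l =
    (-1) ^ l * (8 * N * N.centralBinom / 16 ^ N) *
      (2 * N - 1).choose (N - 1 - l) / (2 * l + 1) := by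
  obtain ⟨s, rfl⟩ := Nat.exists_eq_add_of_lt hl
  rw [← four_mul_risingFactorial_half_sq (by omega), show l + s + 1 = l + 1 + s by ring,
    nodeWeight_eq_factorial, Nat.cast_choose ℚ (by omega),
    show l + 1 + s - 1 - l = s by omega,
    show 2 * (l + 1 + s) - 1 - s = 2 * l + 1 + s by omega]
  have hne : ((2 * (l + 1 + s) - 1).factorial : ℚ) ≠ 0 := mod_cast Nat.factorial_ne_zero _
  field_simp

end Interpolation

section Whipple

/-- The terms of the terminating series `₃F₂(1/2, -l, l + 1; 1, 1; 1)`. -/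
def whippleTerm (l k : ℕ) : ℚ :=
  risingFactorial (1 / 2) k * risingFactorial (-l) k * risingFactorial (l + 1) k /
    k.factorial ^ 3

lemma risingFactorial_neg_eq_zero {l k : ℕ} (h : l < k) : risingFactorial (-l) k = 0 :=
  prod_eq_zero (mem_range.mpr h) (neg_add_cancel _)

lemma whippleTerm_eq_zero {l k : ℕ} (h : l < k) : whippleTerm l k = 0 := by
  simp [whippleTerm, risingFactorial_neg_eq_zero h]

/-- The common part of the terms of index `l` and `l + 2`; up to a rational factor it is the
telescoping certificate for their recurrence. -/
def whippleCert (l k : ℕ) : ℚ :=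
  risingFactorial (1 / 2) k * risingFactorial (-(l + 2 : ℕ)) k * risingFactorial (l + 1) k /
    k.factorial ^ 3

lemma whippleTerm_mul (l k : ℕ) : whippleTerm l k * ((l + 1) * (l + 2)) =
    whippleCert l k * ((l + 1 - k) * (l + 2 - k)) := by
  have h := risingFactorial_add_two (-(l + 2 : ℕ)) k
  rw [show -((l + 2 : ℕ) : ℚ) + 2 = -l by push_cast; ring] at h
  rw [whippleTerm, whippleCert]
  generalize risingFactorial (-l) k = a at *
  generalize risingFactorial (-(l + 2 : ℕ)) k = b at *
  push_cast at h
  linear_combination risingFactorial (1 / 2) k * risingFactorial (l + 1) k /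
    k.factorial ^ 3 * h

lemma whippleTerm_add_two_mul (l k : ℕ) : whippleTerm (l + 2) k * ((l + 1) * (l + 2)) =
    whippleCert l k * ((l + 1 + k) * (l + 2 + k)) := by
  have h := risingFactorial_add_two (l + 1) k
  rw [show (l : ℚ) + 1 + 2 = (l + 2 : ℕ) + 1 by push_cast; ring] at h
  rw [whippleTerm, whippleCert]
  linear_combination risingFactorial (1 / 2) k * risingFactorial (-(l + 2 : ℕ)) k /
    k.factorial ^ 3 * h

lemma whippleCert_succ (l k : ℕ) : whippleCert l (k + 1) * (k + 1) ^ 3 =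
    whippleCert l k * ((k + 1 / 2) * (k - (l + 2)) * (k + l + 1)) := by
  simp only [whippleCert, risingFactorial_succ, Nat.factorial_succ]
  push_cast
  field_simp
  ring

lemma sum_whippleTerm_telescope (l K : ℕ) :
    ∑ k ∈ range K, (((l : ℚ) + 2) ^ 2 * whippleTerm (l + 2) k - (l + 1) ^ 2 * whippleTerm l k) =
      -2 * (2 * l + 3) * K ^ 3 / ((l + 1) * (l + 2)) * whippleCert l K := by
  induction K with
  | zero => simp
  | succ K ih =>
    rw [sum_range_succ, ih]
    push_cast
    field_simp
    linear_combination ((l : ℚ) + 2) ^ 2 * whippleTerm_add_two_mul l K -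
      ((l : ℚ) + 1) ^ 2 * whippleTerm_mul l K + 2 * (2 * l + 3) * whippleCert_succ l K

lemma sum_whippleTerm_add_two {l N : ℕ} (h : l + 2 < N) :
    ((l : ℚ) + 2) ^ 2 * ∑ k ∈ range N, whippleTerm (l + 2) k =
      (l + 1) ^ 2 * ∑ k ∈ range N, whippleTerm l k := by
  have htel := sum_whippleTerm_telescope l N
  rw [whippleCert, risingFactorial_neg_eq_zero h, sum_sub_distrib, ← mul_sum, ← mul_sum] at htel
  linear_combination htel

lemma sum_whippleTerm_even {t N : ℕ} (h : 2 * t < N) :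
    ∑ k ∈ range N, whippleTerm (2 * t) k = (risingFactorial (1 / 2) t / t.factorial) ^ 2 := by
  induction t with
  | zero =>
    rw [sum_eq_single_of_mem 0 (mem_range.mpr h) fun k _ hk =>
      whippleTerm_eq_zero (Nat.pos_of_ne_zero hk)]
    simp [whippleTerm, risingFactorial]
  | succ t ih =>
    have hrec := sum_whippleTerm_add_two (l := 2 * t) h
    rw [ih (by omega)] at hrec
    rw [mul_add_one, risingFactorial_succ, Nat.factorial_succ]
    push_cast at hrec ⊢
    field_simp at hrec ⊢
    linear_combination hrec

lemma sum_whippleTerm_odd {t N : ℕ} (h : 2 * t + 1 < N) :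
    ∑ k ∈ range N, whippleTerm (2 * t + 1) k = 0 := by
  induction t with
  | zero =>
    rw [← sum_subset (range_subset_range.mpr (show 2 ≤ N by omega)) fun k _ hk =>
      whippleTerm_eq_zero (by simpa using hk)]
    norm_num [sum_range_succ, whippleTerm, risingFactorial]
  | succ t ih =>
    have hrec := sum_whippleTerm_add_two (l := 2 * t + 1) h
    rw [ih (by omega), mul_zero] at hrec
    exact (mul_eq_zero.mp hrec).resolve_left (by positivity)

lemma sum_risingFactorial_half_cube_eq_sum_whippleTerm (N : ℕ) :
    ∑ k ∈ range N, risingFactorial (1 / 2) k ^ 3 / (k.factorial : ℚ) ^ 3 =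
      ∑ l ∈ range N, (∑ k ∈ range N, whippleTerm l k) * nodeWeight N l := by
  have h := sum_newton_eq_sum_lagrange node_injective
    (fun k => risingFactorial (1 / 2) k / (k.factorial : ℚ) ^ 3) N
  simp only [prod_node, prod_node_sub_node] at h
  convert h using 3 with k _ l _
  · ring
  · exact sum_congr rfl fun k _ => by rw [whippleTerm]; ring
  · rfl

lemma sum_range_two_mul_add_one {M : Type*} [AddCommMonoid M] (f : ℕ → M) (m : ℕ) :
    ∑ l ∈ range (2 * m + 1), f l =
      ∑ t ∈ range (m + 1), f (2 * t) + ∑ t ∈ range m, f (2 * t + 1) := by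
  induction m with
  | zero => simp
  | succ m ih =>
    rw [mul_add_one, sum_range_succ, sum_range_succ, ih,
      sum_range_succ (fun t => f (2 * t)) (m + 1), sum_range_succ (fun t => f (2 * t + 1)) m,
      mul_add_one]
    abel

lemma sum_risingFactorial_half_cube (m : ℕ) :
    ∑ k ∈ range (2 * m + 1), risingFactorial (1 / 2) k ^ 3 / (k.factorial : ℚ) ^ 3 =
      ∑ t ∈ range (m + 1),
        (risingFactorial (1 / 2) t / t.factorial) ^ 2 * nodeWeight (2 * m + 1) (2 * t) := by
  rw [sum_risingFactorial_half_cube_eq_sum_whippleTerm, sum_range_two_mul_add_one,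
    sum_eq_zero (s := range m), add_zero]
  · refine sum_congr rfl fun t ht => ?_
    rw [sum_whippleTerm_even (by have := mem_range.mp ht; omega)]
  · intro t ht
    rw [sum_whippleTerm_odd (by have := mem_range.mp ht; omega), zero_mul]

end Whipple

section Correction

/-- The part `C(m, t)² / (4t + 1)` of the `t`-th interpolation term that carries its `p`-adic
valuation. -/
def chooseTerm (m t : ℕ) : ℚ := m.choose t ^ 2 / (4 * t + 1 : ℕ)

/-- The remaining factor of the `t`-th interpolation term, a principal unit when `2m + 1` is a
power of `p`. -/
def correction (m t : ℕ) : ℚ :=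
  shiftRatio 1 (-(4 * m + 2)) (2 * (m - t)) / shiftRatio (1 / 2) (-(2 * m + 1) / 2) t ^ 2

lemma half_sq_mul_nodeWeight {m t : ℕ} (ht : t ≤ m) :
    (risingFactorial (1 / 2) t / t.factorial) ^ 2 * nodeWeight (2 * m + 1) (2 * t) =
      8 * (2 * m + 1 : ℕ) * (2 * m + 1).centralBinom / 16 ^ (2 * m + 1) *
        (chooseTerm m t * correction m t) := by
  have hhalf := cast_choose_eq_shiftRatio_half m t
  have hone := cast_choose_eq_shiftRatio_one (4 * m + 1) (2 * (m - t))
  rw [Even.neg_one_pow (even_two_mul _), one_mul,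
    show (((4 * m + 1 : ℕ) : ℚ) + 1) = 4 * m + 2 by push_cast; ring] at hone
  have hne : (m.choose t : ℚ) ≠ 0 := mod_cast (Nat.choose_pos ht).ne'
  have hV : shiftRatio (1 / 2) (-(2 * m + 1) / 2) t ≠ 0 := by
    rw [hhalf] at hne
    exact right_ne_zero_of_mul hne
  have hsq : (m.choose t : ℚ) ^ 2 = (risingFactorial (1 / 2) t / t.factorial) ^ 2 *
      shiftRatio (1 / 2) (-(2 * m + 1) / 2) t ^ 2 := by
    rw [hhalf, mul_pow, mul_pow, ← pow_mul, Even.neg_one_pow (by simp), one_mul]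
  rw [nodeWeight_eq_choose (by omega), chooseTerm, correction, hsq, ← hone,
    show 2 * (2 * m + 1) - 1 = 4 * m + 1 by omega,
    show 2 * m + 1 - 1 - 2 * t = 2 * (m - t) by omega, Even.neg_one_pow (even_two_mul _)]
  generalize shiftRatio (1 / 2) _ t = V at hV ⊢
  push_cast
  field_simp
  ring

lemma two_mul_sub_block {m M μ u₀ u v : ℕ} (hm : m = u₀ * M + μ) (hu : u ≤ u₀) (hv : v ≤ μ) :
    2 * (m - (u * M + v)) = 2 * (u₀ - u) * M + 2 * (μ - v) := by
  have hle : u * M ≤ u₀ * M := Nat.mul_le_mul_right _ hu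
  rw [mul_assoc 2, Nat.sub_mul]
  omega

variable {p : ℕ} [Fact p.Prime] {x : ℚ} {a b k n m : ℕ}

lemma shiftRatio_one_mem_principalUnits (hx : x ∈ padicIdeal p (k + a)) (hb : p ^ (a + 1) ∣ b)
    (hn : n < p ^ (a + 1)) : shiftRatio (1 + b) x n ∈ principalUnits p k := by
  refine shiftRatio_mem_principalUnits fun i hi => ?_
  rw [show (1 : ℚ) + b + i = (b + (i + 1) : ℕ) by push_cast; ring]
  refine div_mem_padicIdeal_of_not_dvd hx fun hdvd => ?_
  exact Nat.not_dvd_of_pos_of_lt i.succ_pos (by omega) ((Nat.dvd_add_right hb).mp hdvd)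

lemma shiftRatio_half_mem_principalUnits (hx : x ∈ padicIdeal p (k + a)) (hb : p ^ (a + 1) ∣ b)
    (hn : 2 * n ≤ p ^ (a + 1)) : shiftRatio (1 / 2 + b) (x / 2) n ∈ principalUnits p k := by
  refine shiftRatio_mem_principalUnits fun i hi => ?_
  rw [show x / 2 / (1 / 2 + b + i) = x / (2 * b + (2 * i + 1) : ℕ) by push_cast; field_simp; ring]
  refine div_mem_padicIdeal_of_not_dvd hx fun hdvd => ?_
  exact Nat.not_dvd_of_pos_of_lt (2 * i).succ_pos (by omega)
    ((Nat.dvd_add_right (hb.mul_left 2)).mp hdvd)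

lemma neg_two_mul_add_one_mem (hm : 2 * m + 1 = p ^ n) : -(2 * m + 1 : ℚ) ∈ padicIdeal p n :=
  neg_mem (by exact_mod_cast natCast_mem_padicIdeal hm.symm.dvd)

lemma neg_four_mul_add_two_mem (hm : 2 * m + 1 = p ^ n) : -(4 * m + 2 : ℚ) ∈ padicIdeal p n := by
  have h : p ^ n ∣ 4 * m + 2 := ⟨2, by omega⟩
  exact neg_mem (by exact_mod_cast natCast_mem_padicIdeal h)

lemma shiftRatio_half_neg_mem_principalUnits {t : ℕ} (hm : 2 * m + 1 = p ^ (n + 1)) (ht : t ≤ m) :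
    shiftRatio (1 / 2) (-(2 * m + 1) / 2) t ∈ principalUnits p 1 := by
  have hm' : 2 * m + 1 = p ^ (1 + n) := by rw [hm, add_comm]
  have hV := shiftRatio_half_mem_principalUnits (neg_two_mul_add_one_mem hm') (dvd_zero _)
    (show 2 * t ≤ p ^ (n + 1) by omega)
  rwa [Nat.cast_zero, add_zero] at hV

lemma correction_mem_principalUnits {t : ℕ} (hm : 2 * m + 1 = p ^ (n + 1)) (ht : t ≤ m) :
    correction m t ∈ principalUnits p 1 := by
  have hm' : 2 * m + 1 = p ^ (1 + n) := by rw [hm, add_comm]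
  have hZ := shiftRatio_one_mem_principalUnits (neg_four_mul_add_two_mem hm') (dvd_zero _)
    (show 2 * (m - t) < p ^ (n + 1) by omega)
  rw [Nat.cast_zero, add_zero] at hZ
  exact div_mem_principalUnits one_ne_zero hZ
    (pow_mem (shiftRatio_half_neg_mem_principalUnits hm ht) 2)

variable {u₀ u v w μ : ℕ}

lemma correction_block (hN : 2 * m + 1 = p ^ (n + 2)) (hM : 2 * μ + 1 = p ^ (n + 1))
    (hm : m = u₀ * p ^ (n + 1) + μ) (hu : u ≤ u₀) (hv : v ≤ μ) :
    ∃ κ ∈ principalUnits p 2, correction m (u * p ^ (n + 1) + v) =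
      shiftRatio 1 (-(4 * m + 2)) (2 * (u₀ - u) * p ^ (n + 1)) /
        shiftRatio (1 / 2) (-(2 * m + 1) / 2) (u * p ^ (n + 1)) ^ 2 * κ := by
  have hN' : 2 * m + 1 = p ^ (2 + n) := by rw [hN, add_comm]
  have hZ := shiftRatio_one_mem_principalUnits (neg_four_mul_add_two_mem hN')
    (dvd_mul_left (p ^ (n + 1)) (2 * (u₀ - u))) (show 2 * (μ - v) < p ^ (n + 1) by omega)
  have hV := shiftRatio_half_mem_principalUnits (neg_two_mul_add_one_mem hN')
    (dvd_mul_left (p ^ (n + 1)) u) (show 2 * v ≤ p ^ (n + 1) by omega)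
  refine ⟨_, div_mem_principalUnits two_ne_zero hZ (pow_mem hV 2), ?_⟩
  rw [correction, two_mul_sub_block hm hu hv, shiftRatio_add, shiftRatio_add, mul_pow,
    mul_div_mul_comm]

lemma correction_sub_mem_padicIdeal (hN : 2 * m + 1 = p ^ (n + 2)) (hM : 2 * μ + 1 = p ^ (n + 1))
    (hm : m = u₀ * p ^ (n + 1) + μ) (hu : u ≤ u₀) (hv : v ≤ μ) (hw : w ≤ μ) :
    correction m (u * p ^ (n + 1) + v) - correction m (u * p ^ (n + 1) + w) ∈ padicIdeal p 2 := by
  obtain ⟨κ, hκ, hv'⟩ := correction_block hN hM hm hu hv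
  obtain ⟨η, hη, hw'⟩ := correction_block hN hM hm hu hw
  have hle : u * p ^ (n + 1) ≤ u₀ * p ^ (n + 1) := Nat.mul_le_mul_right _ hu
  have hint := mem_padicIdeal_zero_of_sub_one_mem
    (correction_mem_principalUnits hN (show u * p ^ (n + 1) + v ≤ m by omega))
  have hsplit : correction m (u * p ^ (n + 1) + v) - correction m (u * p ^ (n + 1) + w) =
      -((η / κ - 1) * correction m (u * p ^ (n + 1) + v)) := by
    have := ne_zero_of_mem_principalUnits two_ne_zero hκ
    rw [hv', hw']
    generalize shiftRatio 1 _ _ / _ = E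
    field_simp
    ring
  rw [hsplit]
  exact neg_mem (mul_mem_padicIdeal (div_mem_principalUnits two_ne_zero hη hκ) hint)

end Correction

section Carry

lemma pow_mod_four_of_even {p j : ℕ} (h : p % 4 = 3) (hj : Even j) : p ^ j % 4 = 1 := by
  obtain ⟨k, rfl⟩ := hj
  have hsq : p ^ 2 % 4 = 1 := by rw [Nat.pow_mod, h]
  rw [← two_mul, pow_mul, Nat.pow_mod, hsq, one_pow, Nat.one_mod_eq_one.mpr (by norm_num)]

lemma pow_mod_four_of_odd {p j : ℕ} (h : p % 4 = 3) (hj : Odd j) : p ^ j % 4 = 3 := by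
  obtain ⟨k, rfl⟩ := hj
  rw [pow_succ, Nat.mul_mod, pow_mod_four_of_even h (even_two_mul k), h]

lemma four_mul_mod_add_one {d x : ℕ} (hd : d % 4 = 3) (hx : d ∣ 4 * x + 1) :
    4 * (x % d) + 1 = 3 * d := by
  have hlt : x % d < d := Nat.mod_lt _ (by omega)
  have hdvd : d ∣ 4 * (x % d) + 1 := by
    have hsplit : 4 * x + 1 = d * (4 * (x / d)) + (4 * (x % d) + 1) := by
      linarith [Nat.div_add_mod x d]
    rw [hsplit] at hx
    exact (Nat.dvd_add_right (Dvd.intro _ rfl)).mp hx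
  obtain ⟨c, hc⟩ := hdvd
  have hc4 : c < 4 := by
    by_contra! hge
    have := Nat.mul_le_mul_left d hge
    omega
  interval_cases c <;> omega

-- Both `t` and `m - t` have residue `(3 * d - 1) / 4`, more than half of `d`.
lemma le_mod_add_mod_of_dvd {d t m : ℕ} (hd : d % 4 = 3) (hm : d ∣ 2 * m + 1) (ht : t ≤ m)
    (h : d ∣ 4 * t + 1) : d ≤ t % d + (m - t) % d := by
  have h' : d ∣ 4 * (m - t) + 1 := by
    rw [show 4 * (m - t) + 1 = 2 * (2 * m + 1) - (4 * t + 1) by omega]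
    exact Nat.dvd_sub (hm.mul_left 2) h
  have := four_mul_mod_add_one hd h
  have := four_mul_mod_add_one hd h'
  omega

lemma pow_card_dvd_choose {p m t : ℕ} (hp : p.Prime) (ht : t ≤ m) {S : Finset ℕ}
    (hS : ∀ k ∈ S, p ^ (2 * k + 1) ≤ t % p ^ (2 * k + 1) + (m - t) % p ^ (2 * k + 1)) :
    p ^ #S ∣ m.choose t := by
  have hinj : Function.Injective fun k : ℕ => 2 * k + 1 := fun a b h => by simpa using h
  rw [hp.pow_dvd_iff_le_factorization (Nat.choose_pos ht).ne',
    Nat.factorization_choose hp ht (Nat.lt_succ_self _),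
    ← card_image_of_injective S hinj]
  refine card_le_card fun j hj => ?_
  obtain ⟨k, hk, rfl⟩ := mem_image.mp hj
  have hcarry := hS k hk
  have hpow : p ^ (2 * k + 1) ≤ m :=
    calc p ^ (2 * k + 1) ≤ t + (m - t) :=
        hcarry.trans (add_le_add (Nat.mod_le _ _) (Nat.mod_le _ _))
      _ = m := Nat.add_sub_cancel' ht
  rw [mem_filter, mem_Ico]
  exact ⟨⟨Nat.le_add_left 1 _, Nat.lt_succ_of_le (Nat.le_log_of_pow_le hp.one_lt hpow)⟩, hcarry⟩

lemma carry_of_pow_dvd {p m t i k : ℕ} (h4 : p % 4 = 3) (ht : t ≤ m) (hm : p ^ i ∣ 2 * m + 1)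
    (hi : p ^ i ∣ 4 * t + 1) (hk : 2 * k + 1 ≤ i) :
    p ^ (2 * k + 1) ≤ t % p ^ (2 * k + 1) + (m - t) % p ^ (2 * k + 1) :=
  le_mod_add_mod_of_dvd (pow_mod_four_of_odd h4 (odd_two_mul_add_one k))
    ((pow_dvd_pow p hk).trans hm) ht ((pow_dvd_pow p hk).trans hi)

lemma pow_dvd_choose_of_pow_dvd {p m t i : ℕ} (hp : p.Prime) (h4 : p % 4 = 3) (ht : t ≤ m)
    (hm : p ^ i ∣ 2 * m + 1) (hi : p ^ i ∣ 4 * t + 1) : p ^ ((i + 1) / 2) ∣ m.choose t := by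
  have h := pow_card_dvd_choose hp ht (S := range ((i + 1) / 2)) fun k hk =>
    carry_of_pow_dvd h4 ht hm hi (by have := mem_range.mp hk; omega)
  rwa [card_range] at h

lemma pow_succ_dvd_choose_of_carry {p m t i s : ℕ} (hp : p.Prime) (h4 : p % 4 = 3) (ht : t ≤ m)
    (hm : p ^ i ∣ 2 * m + 1) (hi : p ^ i ∣ 4 * t + 1) (his : i / 2 ≤ s)
    (hs : p ^ (2 * s + 1) ≤ t % p ^ (2 * s + 1) + (m - t) % p ^ (2 * s + 1)) :
    p ^ (i / 2 + 1) ∣ m.choose t := by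
  have h := pow_card_dvd_choose hp ht (S := insert s (range (i / 2))) fun k hk => by
    rcases mem_insert.mp hk with rfl | hk
    · exact hs
    · exact carry_of_pow_dvd h4 ht hm hi (by have := mem_range.mp hk; omega)
  rwa [card_insert_of_notMem (by simpa using his), card_range] at h

lemma not_dvd_of_lt_two_mul {n q : ℕ} (h0 : 0 < q) (h : q < 2 * n) (hne : q ≠ n) : ¬ n ∣ q := by
  rintro ⟨c, rfl⟩
  have hc : c < 2 := by
    by_contra! hge
    have := Nat.mul_le_mul_left n hge
    omega
  interval_cases c <;> omega

variable {p : ℕ} [Fact p.Prime] {m t n s : ℕ}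

lemma chooseTerm_mem_padicIdeal_of_pow_dvd {c i : ℕ} (hc : p ^ c ∣ m.choose t)
    (hi : ¬ p ^ (i + 1) ∣ 4 * t + 1) (hle : n + i ≤ 2 * c) : chooseTerm m t ∈ padicIdeal p n := by
  refine div_mem_padicIdeal_of_not_dvd (padicIdeal_antitone (hle.trans_eq (mul_comm 2 c)) ?_) hi
  rw [← Nat.cast_pow]
  refine natCast_mem_padicIdeal ?_
  rw [pow_mul]
  exact pow_dvd_pow_of_dvd hc 2

lemma exists_pow_dvd_and_not_pow_succ_dvd (hm : 2 * m + 1 = p ^ (n + 1)) (ht : t ≤ m)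
    (hne : 2 * t ≠ m) :
    ∃ i ≤ n, p ^ i ∣ 2 * m + 1 ∧ p ^ i ∣ 4 * t + 1 ∧ ¬ p ^ (i + 1) ∣ 4 * t + 1 := by
  have hN : ¬ p ^ (n + 1) ∣ 4 * t + 1 := by
    rw [← hm]
    exact not_dvd_of_lt_two_mul (by omega) (by omega) (by omega)
  have hdvd : p ^ padicValNat p (4 * t + 1) ∣ 4 * t + 1 := pow_padicValNat_dvd
  have hle : padicValNat p (4 * t + 1) ≤ n := by
    by_contra! hlt
    exact hN ((pow_dvd_pow p hlt).trans hdvd)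
  refine ⟨_, hle, ?_, hdvd, pow_succ_padicValNat_not_dvd (by omega)⟩
  rw [hm]
  exact pow_dvd_pow p (by omega)

lemma chooseTerm_mem_padicIdeal_zero (h4 : p % 4 = 3) (hm : 2 * m + 1 = p ^ (n + 1)) (ht : t ≤ m)
    (hne : 2 * t ≠ m) : chooseTerm m t ∈ padicIdeal p 0 := by
  obtain ⟨i, -, hi, hi', hi''⟩ := exists_pow_dvd_and_not_pow_succ_dvd hm ht hne
  exact chooseTerm_mem_padicIdeal_of_pow_dvd
    (pow_dvd_choose_of_pow_dvd Fact.out h4 ht hi hi') hi'' (by omega)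

lemma chooseTerm_mem_padicIdeal_one (h4 : p % 4 = 3) (hm : 2 * m + 1 = p ^ (2 * s + 2))
    (ht : t ≤ m) (hne : 2 * t ≠ m)
    (hcarry : p ^ (2 * s + 1) ≤ t % p ^ (2 * s + 1) + (m - t) % p ^ (2 * s + 1)) :
    chooseTerm m t ∈ padicIdeal p 1 := by
  obtain ⟨i, his, hi, hi', hi''⟩ := exists_pow_dvd_and_not_pow_succ_dvd hm ht hne
  exact chooseTerm_mem_padicIdeal_of_pow_dvd
    (pow_succ_dvd_choose_of_carry Fact.out h4 ht hi hi' (by omega) hcarry) hi'' (by omega)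

end Carry

section Reflection

lemma eq_div_two_mul_pow_add {p m n : ℕ} (hp : p % 2 = 1) (hm : 2 * m + 1 = p ^ (n + 1)) :
    m = p / 2 * p ^ n + p ^ n / 2 := by
  have hodd : p ^ n % 2 = 1 := Nat.odd_iff.mp ((Nat.odd_iff.mpr hp).pow)
  have h : 2 * (p / 2) * p ^ n + p ^ n = p ^ (n + 1) := by
    rw [← Nat.succ_mul, pow_succ', show (2 * (p / 2)).succ = p by omega]
  rw [mul_assoc] at h
  omega

variable {p : ℕ} [Fact p.Prime] {m t s : ℕ}

lemma chooseTerm_add_chooseTerm_sub (ht : t ≤ m) : chooseTerm m t + chooseTerm m (m - t) =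
    (2 * (2 * m + 1) : ℕ) / (4 * (m - t) + 1 : ℕ) * chooseTerm m t := by
  rw [chooseTerm, chooseTerm, Nat.choose_symm ht]
  push_cast [Nat.cast_sub ht]
  have h : (4 : ℚ) * (m - t) + 1 ≠ 0 := by
    have : (t : ℚ) ≤ m := mod_cast ht
    linarith
  field_simp
  ring

lemma chooseTerm_add_chooseTerm_sub_mem (h4 : p % 4 = 3) (hm : 2 * m + 1 = p ^ (2 * s + 2))
    (ht : t ≤ m) (hne : 2 * t ≠ m) : chooseTerm m t + chooseTerm m (m - t) ∈ padicIdeal p 2 := by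
  have hN : ((2 * (2 * m + 1) : ℕ) : ℚ) ∈ padicIdeal p (2 * s + 2) :=
    natCast_mem_padicIdeal (hm.symm.dvd.mul_left 2)
  rw [chooseTerm_add_chooseTerm_sub ht]
  by_cases hdvd : p ^ (2 * s + 1) ∣ 4 * (m - t) + 1
  · have hcarry := le_mod_add_mod_of_dvd (pow_mod_four_of_odd h4 (odd_two_mul_add_one s))
      (hm ▸ pow_dvd_pow p (by omega)) (Nat.sub_le m t) hdvd
    rw [Nat.sub_sub_self ht, add_comm ((m - t) % _)] at hcarry
    have hlast : ¬ p ^ (2 * s + 1 + 1) ∣ 4 * (m - t) + 1 := by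
      rw [show 2 * s + 1 + 1 = 2 * s + 2 by ring, ← hm]
      exact not_dvd_of_lt_two_mul (by omega) (by omega) (by omega)
    exact mul_mem_padicIdeal
      (div_mem_padicIdeal_of_not_dvd (padicIdeal_antitone (by omega) hN) hlast)
      (chooseTerm_mem_padicIdeal_one h4 hm ht hne hcarry)
  · exact mul_mem_padicIdeal
      (div_mem_padicIdeal_of_not_dvd (padicIdeal_antitone (by omega) hN) hdvd)
      (chooseTerm_mem_padicIdeal_zero h4 hm ht hne)

variable {u₀ u v μ n : ℕ}

lemma choose_block (hM : 2 * μ + 1 = p ^ (n + 1)) (hm : m = u₀ * p ^ (n + 1) + μ) (hu : u ≤ u₀)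
    (hv : v ≤ μ) : ∃ ρ ∈ principalUnits p 1, (m.choose (u * p ^ (n + 1) + v) : ℚ) =
      (u₀ * p ^ (n + 1)).choose (u * p ^ (n + 1)) * μ.choose v * ρ := by
  have hunit (c b : ℕ) (hb : b ≤ μ) : shiftRatio 1 (c * p ^ (n + 1) : ℕ) b ∈
      principalUnits p 1 := by
    have hx : ((c * p ^ (n + 1) : ℕ) : ℚ) ∈ padicIdeal p (1 + n) :=
      natCast_mem_padicIdeal (by rw [add_comm 1 n]; exact dvd_mul_left _ c)
    simpa using shiftRatio_one_mem_principalUnits hx (dvd_zero _)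
      (show b < p ^ (n + 1) by omega)
  have h₀ := hunit u₀ μ le_rfl
  have h₁ := hunit u v hv
  have h₂ := hunit (u₀ - u) (μ - v) (Nat.sub_le μ v)
  refine ⟨_, div_mem_principalUnits one_ne_zero h₀ (mul_mem h₁ h₂), ?_⟩
  have hle : u * p ^ (n + 1) ≤ u₀ * p ^ (n + 1) := Nat.mul_le_mul_right _ hu
  rw [hm, Nat.cast_choose ℚ (by omega), Nat.cast_choose ℚ hle, Nat.cast_choose ℚ hv,
    show u₀ * p ^ (n + 1) + μ - (u * p ^ (n + 1) + v) = (u₀ - u) * p ^ (n + 1) + (μ - v) by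
      rw [Nat.sub_mul]; omega,
    ← Nat.sub_mul, cast_factorial_add, cast_factorial_add, cast_factorial_add]
  have := ne_zero_of_mem_principalUnits one_ne_zero h₁
  have := ne_zero_of_mem_principalUnits one_ne_zero h₂
  field_simp

lemma choose_block_reflect (hM : 2 * μ + 1 = p ^ (n + 1)) (hm : m = u₀ * p ^ (n + 1) + μ)
    (hu : u ≤ u₀) (hv : v ≤ μ) : ∃ κ ∈ principalUnits p 1,
      (m.choose (u * p ^ (n + 1) + (μ - v)) : ℚ) = κ * m.choose (u * p ^ (n + 1) + v) := by
  obtain ⟨ρ, hρ, h⟩ := choose_block hM hm hu hv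
  obtain ⟨ρ', hρ', h'⟩ := choose_block hM hm hu (Nat.sub_le μ v)
  refine ⟨_, div_mem_principalUnits one_ne_zero hρ' hρ, ?_⟩
  have := ne_zero_of_mem_principalUnits one_ne_zero hρ
  rw [h, h', Nat.choose_symm hv]
  field_simp

lemma not_dvd_four_mul_add_one {d : ℕ} (hd : d % 4 = 3) (ht : t % d ≤ d / 2) : ¬ d ∣ 4 * t + 1 := by
  intro h
  have := four_mul_mod_add_one hd h
  omega

lemma chooseTerm_add_of_choose_eq_mul {t' : ℕ} {κ : ℚ} (hκ : κ ≠ 0)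
    (h : (m.choose t' : ℚ) = κ * m.choose t) : chooseTerm m t + chooseTerm m t' =
      ((4 * t + 1 + (4 * t' + 1) : ℕ) / (4 * t + 1 : ℕ) + (κ ^ 2 - 1)) *
        ((κ ^ 2)⁻¹ * chooseTerm m t') := by
  rw [chooseTerm, chooseTerm, h]
  push_cast
  field_simp
  ring

lemma chooseTerm_add_mem_padicIdeal_one {t' : ℕ} {κ : ℚ} (hκ : κ ∈ principalUnits p 1)
    (h : (m.choose t' : ℚ) = κ * m.choose t) (hsum : p ^ (n + 1) ∣ 4 * t + 1 + (4 * t' + 1))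
    (ht : ¬ p ^ (n + 1) ∣ 4 * t + 1) (ht' : chooseTerm m t' ∈ padicIdeal p 0) :
    chooseTerm m t + chooseTerm m t' ∈ padicIdeal p 1 := by
  rw [chooseTerm_add_of_choose_eq_mul (ne_zero_of_mem_principalUnits one_ne_zero hκ) h]
  have hκ2 : κ ^ 2 ∈ principalUnits p 1 := pow_mem hκ 2
  have hnum : ((4 * t + 1 + (4 * t' + 1) : ℕ) : ℚ) ∈ padicIdeal p (1 + n) :=
    natCast_mem_padicIdeal (by rwa [add_comm 1 n])
  exact mul_mem_padicIdeal (add_mem (div_mem_padicIdeal_of_not_dvd hnum ht) hκ2)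
    (mul_mem_padicIdeal
      (mem_padicIdeal_zero_of_sub_one_mem (inv_mem_principalUnits one_ne_zero hκ2)) ht')

lemma chooseTerm_block_add_reflect_mem (h4 : p % 4 = 3) (hN : 2 * m + 1 = p ^ (2 * s + 2))
    (hM : 2 * μ + 1 = p ^ (2 * s + 1)) (hm : m = u₀ * p ^ (2 * s + 1) + μ) (hu : u ≤ u₀)
    (hv : v ≤ μ) : chooseTerm m (u * p ^ (2 * s + 1) + v) +
      chooseTerm m (u * p ^ (2 * s + 1) + (μ - v)) ∈ padicIdeal p 1 := by
  have hndvd (w : ℕ) (hw : w ≤ μ) : ¬ p ^ (2 * s + 1) ∣ 4 * (u * p ^ (2 * s + 1) + w) + 1 := by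
    refine not_dvd_four_mul_add_one (pow_mod_four_of_odd h4 (odd_two_mul_add_one s)) ?_
    rw [Nat.mul_add_mod', Nat.mod_eq_of_lt (by omega)]
    omega
  have hle : u * p ^ (2 * s + 1) ≤ u₀ * p ^ (2 * s + 1) := Nat.mul_le_mul_right _ hu
  obtain ⟨κ, hκ, hchoose⟩ := choose_block_reflect hM hm hu hv
  refine chooseTerm_add_mem_padicIdeal_one hκ hchoose ⟨8 * u + 2, ?_⟩ (hndvd v hv)
    (chooseTerm_mem_padicIdeal_zero h4 hN (by omega) fun hc => hndvd _ (Nat.sub_le μ v) ?_)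
  · rw [← hM]
    grind
  · rw [show 4 * (u * p ^ (2 * s + 1) + (μ - v)) + 1 = 2 * m + 1 by omega, hN]
    exact pow_dvd_pow p (by omega)

/-- The reflection of the residues at most `M / 2` within each block of length `M`; larger residues
are fixed. -/
def blockReflect (M t : ℕ) : ℕ := if t % M ≤ M / 2 then t / M * M + (M / 2 - t % M) else t

lemma blockReflect_of_le {M : ℕ} (h : t % M ≤ M / 2) :
    blockReflect M t = t / M * M + (M / 2 - t % M) := if_pos h

lemma blockReflect_of_lt {M : ℕ} (h : M / 2 < t % M) : blockReflect M t = t := if_neg h.not_ge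

lemma blockReflect_blockReflect {M : ℕ} (hM : M ≠ 0) (t : ℕ) :
    blockReflect M (blockReflect M t) = t := by
  rcases le_or_gt (t % M) (M / 2) with h | h
  · have hlt : M / 2 - t % M < M := by omega
    have hmod : (t / M * M + (M / 2 - t % M)) % M = M / 2 - t % M := by
      rw [Nat.mul_add_mod', Nat.mod_eq_of_lt hlt]
    have hdiv : (t / M * M + (M / 2 - t % M)) / M = t / M := by
      rw [mul_comm, Nat.mul_add_div (by omega), Nat.div_eq_of_lt hlt, add_zero]
    rw [blockReflect_of_le h, blockReflect_of_le (hmod.trans_le (Nat.sub_le _ _)), hmod, hdiv,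
      Nat.sub_sub_self h, Nat.div_add_mod']
  · rw [blockReflect_of_lt h, blockReflect_of_lt h]

lemma div_le_of_le_block {M : ℕ} (hM : M ≠ 0) (ht : t ≤ u₀ * M + M / 2) : t / M ≤ u₀ := by
  rw [← Nat.lt_succ_iff, Nat.div_lt_iff_lt_mul (by omega), Nat.succ_mul]
  omega

lemma blockReflect_le {M : ℕ} (hM : M ≠ 0) (ht : t ≤ u₀ * M + M / 2) :
    blockReflect M t ≤ u₀ * M + M / 2 := by
  rcases le_or_gt (t % M) (M / 2) with h | h
  · have hle : t / M * M ≤ u₀ * M := Nat.mul_le_mul_right M (div_le_of_le_block hM ht)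
    rw [blockReflect_of_le h]
    omega
  · rwa [blockReflect_of_lt h]

lemma carry_of_half_lt_mod {M : ℕ} (hm : m % M = M / 2) (ht : t ≤ m) (h : M / 2 < t % M) :
    M ≤ t % M + (m - t) % M := by
  by_contra! hlt
  have hmod := Nat.add_mod t (m - t) M
  rw [Nat.add_sub_cancel' ht, Nat.mod_eq_of_lt hlt, hm] at hmod
  omega

lemma chooseTerm_mul_correction_add_blockReflect_mem (h4 : p % 4 = 3)
    (hN : 2 * m + 1 = p ^ (2 * s + 2)) (hm : m = u₀ * p ^ (2 * s + 1) + p ^ (2 * s + 1) / 2)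
    (ht : t ≤ m) (hne : 2 * t ≠ m) :
    chooseTerm m t * (correction m t - 1) + chooseTerm m (blockReflect (p ^ (2 * s + 1)) t) *
      (correction m (blockReflect (p ^ (2 * s + 1)) t) - 1) ∈ padicIdeal p 2 := by
  set M := p ^ (2 * s + 1) with hMdef
  have hM4 : M % 4 = 3 := pow_mod_four_of_odd h4 (odd_two_mul_add_one s)
  have hM : 2 * (M / 2) + 1 = M := by omega
  rcases le_or_gt (t % M) (M / 2) with hlow | hhigh
  · have hu : t / M ≤ u₀ := div_le_of_le_block (by omega) (ht.trans_eq hm)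
    have hle : blockReflect M t ≤ m := by
      rw [hm] at ht ⊢
      exact blockReflect_le (by omega) ht
    have hadd := chooseTerm_block_add_reflect_mem h4 hN hM hm hu hlow
    have hsub := correction_sub_mem_padicIdeal hN hM hm hu (Nat.sub_le _ (t % M)) hlow
    rw [← hMdef, ← blockReflect_of_le hlow, Nat.div_add_mod'] at hadd hsub
    have hsplit (g g' e e' : ℚ) :
        g * (e - 1) + g' * (e' - 1) = (g + g') * (e' - 1) - g * (e' - e) := by ring
    rw [hsplit]
    exact sub_mem (mul_mem_padicIdeal hadd (correction_mem_principalUnits hN hle))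
      (mul_mem_padicIdeal (n := 0) (chooseTerm_mem_padicIdeal_zero h4 hN ht hne) hsub)
  · have hmod : m % M = M / 2 := by rw [hm, Nat.mul_add_mod', Nat.mod_eq_of_lt (by omega)]
    have hint := chooseTerm_mem_padicIdeal_one h4 hN ht hne (carry_of_half_lt_mod hmod ht hhigh)
    have hmul := mul_mem_padicIdeal hint (correction_mem_principalUnits hN ht)
    rw [blockReflect_of_lt hhigh]
    exact add_mem hmul hmul

lemma blockReflect_center {M h : ℕ} (hM : M % 4 = 3) (hh : M ∣ 4 * h + 1) :
    blockReflect M h = h := by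
  have := four_mul_mod_add_one hM hh
  exact blockReflect_of_lt (by omega)

lemma sum_chooseTerm_mem (h4 : p % 4 = 3) {h : ℕ} (hN : 4 * h + 1 = p ^ (2 * s + 2)) :
    ∑ t ∈ (range (2 * h + 1)).erase h, chooseTerm (2 * h) t ∈ padicIdeal p 2 := by
  refine sum_mem_padicIdeal_of_involution (σ := fun t => 2 * h - t) (by rintro rfl; omega)
    (fun t ht => ?_) (fun t ht => ?_) fun t ht => ?_
  all_goals
    rw [mem_erase, mem_range] at ht
  · rw [mem_erase, mem_range]
    omega
  · omega
  · exact chooseTerm_add_chooseTerm_sub_mem (s := s) h4 (by omega) (by omega) (by omega)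

lemma sum_chooseTerm_mul_correction_sub_one_mem (h4 : p % 4 = 3) {h : ℕ}
    (hN : 4 * h + 1 = p ^ (2 * s + 2)) :
    ∑ t ∈ (range (2 * h + 1)).erase h, chooseTerm (2 * h) t * (correction (2 * h) t - 1) ∈
      padicIdeal p 2 := by
  have hN' : 2 * (2 * h) + 1 = p ^ (2 * s + 2) := by omega
  have hM4 : p ^ (2 * s + 1) % 4 = 3 := pow_mod_four_of_odd h4 (odd_two_mul_add_one s)
  have hM0 : p ^ (2 * s + 1) ≠ 0 := by omega
  have hm := eq_div_two_mul_pow_add (by omega) hN'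
  have hcenter : blockReflect (p ^ (2 * s + 1)) h = h :=
    blockReflect_center hM4 (hN ▸ pow_dvd_pow p (by omega))
  refine sum_mem_padicIdeal_of_involution (σ := blockReflect (p ^ (2 * s + 1)))
    (by rintro rfl; omega) (fun t ht => ?_) (fun t _ => blockReflect_blockReflect hM0 t)
    fun t ht => ?_
  all_goals
    rw [mem_erase, mem_range] at ht
  · have hle : blockReflect (p ^ (2 * s + 1)) t ≤ 2 * h := by
      rw [hm]
      exact blockReflect_le hM0 (by omega)
    rw [mem_erase, mem_range]
    refine ⟨fun hfix => ht.1 ?_, by omega⟩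
    rw [← blockReflect_blockReflect hM0 t, hfix, hcenter]
  · exact chooseTerm_mul_correction_add_blockReflect_mem h4 hN' hm (by omega) (by omega)

lemma sum_chooseTerm_mul_correction_mem (h4 : p % 4 = 3) {h : ℕ}
    (hN : 4 * h + 1 = p ^ (2 * s + 2)) :
    ∑ t ∈ (range (2 * h + 1)).erase h, chooseTerm (2 * h) t * correction (2 * h) t ∈
      padicIdeal p 2 := by
  have hsum := add_mem (sum_chooseTerm_mul_correction_sub_one_mem h4 hN) (sum_chooseTerm_mem h4 hN)
  rw [← sum_add_distrib] at hsum
  simpa only [mul_sub_one, sub_add_cancel] using hsum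

end Reflection

section CentralTerm

lemma risingFactorial_three_quarters (h : ℕ) : risingFactorial (3 / 4) (2 * h) =
    (-1) ^ h * risingFactorial (1 / 2) h ^ 2 *
      (shiftRatio (1 / 2) (h + 1 / 4) h * shiftRatio (1 / 2) (-(h + 1 / 4)) h) := by
  rw [two_mul, risingFactorial_add, risingFactorial_reflect,
    show (1 : ℚ) - h - 3 / 4 = 1 / 2 + -(h + 1 / 4) by ring,
    show (3 : ℚ) / 4 + h = 1 / 2 + (h + 1 / 4) by ring,
    risingFactorial_add_left one_half_pos, risingFactorial_add_left one_half_pos]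
  ring

lemma risingFactorial_five_quarters (h : ℕ) : risingFactorial (5 / 4) (2 * h) =
    (4 * h + 1) * ((-1) ^ h * h.factorial ^ 2 *
      (shiftRatio 1 (h + 1 / 4) h * shiftRatio 1 (-(h + 1 / 4)) h)) := by
  have hone (a : ℚ) : risingFactorial a 1 = a := by simp [risingFactorial]
  have hfirst := risingFactorial_add (1 / 4) 1 (2 * h)
  have hmiddle := risingFactorial_add (1 / 4) h (1 + h)
  rw [risingFactorial_add _ 1 h, hone, risingFactorial_reflect _ h,
    show (1 : ℚ) - h - 1 / 4 = 1 + -(h + 1 / 4) by ring,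
    show (1 : ℚ) / 4 + h + (1 : ℕ) = 1 + (h + 1 / 4) by push_cast; ring,
    risingFactorial_add_left one_pos, risingFactorial_add_left one_pos, risingFactorial_one,
    show h + (1 + h) = 1 + 2 * h by ring, hfirst, hone,
    show (1 : ℚ) / 4 + (1 : ℕ) = 5 / 4 by norm_num] at hmiddle
  linear_combination 4 * hmiddle

variable {p : ℕ} [Fact p.Prime] {h m n s : ℕ}

lemma div_mem_padicIdeal_one {N j : ℕ} (hN : N = p ^ (n + 1)) (hj : ¬ N ∣ j) :
    (N / j : ℚ) ∈ padicIdeal p 1 := by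
  have hmem : (N : ℚ) ∈ padicIdeal p (1 + n) :=
    natCast_mem_padicIdeal (by rw [hN, add_comm])
  exact div_mem_padicIdeal_of_not_dvd hmem (hN ▸ hj)

lemma exists_mul_risingFactorial_div_eq (hN : 4 * h + 1 = p ^ (n + 1)) :
    ∃ Q ∈ principalUnits p 2, (4 * h + 1 : ℕ) * risingFactorial (3 / 4) (2 * h) /
      risingFactorial (5 / 4) (2 * h) = (risingFactorial (1 / 2) h / h.factorial) ^ 2 * Q := by
  have hhalf : ∀ i < h, ((h : ℚ) + 1 / 4) / (1 / 2 + i) ∈ padicIdeal p 1 := fun i hi => by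
    have hndvd : ¬ 4 * h + 1 ∣ 4 * i + 2 := Nat.not_dvd_of_pos_of_lt (by omega) (by omega)
    convert div_mem_padicIdeal_one hN hndvd using 1
    push_cast
    field_simp
    ring
  have hone : ∀ i < h, ((h : ℚ) + 1 / 4) / (1 + i) ∈ padicIdeal p 1 := fun i hi => by
    have hndvd : ¬ 4 * h + 1 ∣ 4 * (1 + i) := Nat.not_dvd_of_pos_of_lt (by omega) (by omega)
    convert div_mem_padicIdeal_one hN hndvd using 1
    push_cast
    field_simp
  have hhalf2 := shiftRatio_mul_shiftRatio_neg_mem_principalUnits hhalf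
  have hone2 := shiftRatio_mul_shiftRatio_neg_mem_principalUnits hone
  refine ⟨_, div_mem_principalUnits two_ne_zero hhalf2 hone2, ?_⟩
  have hsign : (-1 : ℚ) ^ h ≠ 0 := by simp
  have hN0 : (4 * h + 1 : ℚ) ≠ 0 := by positivity
  rw [risingFactorial_three_quarters, risingFactorial_five_quarters, Nat.cast_add_one,
    Nat.cast_mul, Nat.cast_ofNat, mul_div_mul_left _ _ hN0, mul_assoc, mul_assoc,
    mul_div_mul_left _ _ hsign, div_pow, div_mul_div_comm]

lemma nodeWeight_center_mem_principalUnits (hN : 2 * m + 1 = p ^ (n + 1)) :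
    nodeWeight (2 * m + 1) m ∈ principalUnits p 2 := by
  refine prod_mem fun j hj => ?_
  obtain ⟨hne, hlt⟩ : j ≠ m ∧ j < 2 * m + 1 := by simpa using hj
  have hmem := div_mem_padicIdeal_one hN
    (not_dvd_of_lt_two_mul (q := 2 * j + 1) (by omega) (by omega) (by omega))
  have hunit : 1 + -(((2 * m + 1 : ℕ) : ℚ) / (2 * j + 1 : ℕ) *
      (((2 * m + 1 : ℕ) : ℚ) / (2 * j + 1 : ℕ))) ∈ principalUnits p 2 :=
    one_add_mem_principalUnits.mpr (neg_mem (mul_mem_padicIdeal hmem hmem))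
  have hnode : node j - node m = node j * (1 + -(((2 * m + 1 : ℕ) : ℚ) / (2 * j + 1 : ℕ) *
      (((2 * m + 1 : ℕ) : ℚ) / (2 * j + 1 : ℕ)))) := by
    have : 2 * (j : ℚ) + 1 ≠ 0 := by positivity
    unfold node
    push_cast
    field_simp
    ring
  have hnode0 : node j ≠ 0 := by unfold node; positivity
  rw [hnode, div_mul_cancel_left₀ hnode0]
  exact inv_mem_principalUnits two_ne_zero hunit

lemma risingFactorial_half_center_sq_mem (h4 : p % 4 = 3) (hN : 4 * h + 1 = p ^ (2 * s + 2)) :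
    (risingFactorial (1 / 2) h / h.factorial) ^ 2 ∈ padicIdeal p (2 * s + 2) := by
  have hN' : 2 * (2 * h) + 1 = p ^ (2 * s + 2) := by omega
  have hdvd : p ^ (s + 1) ∣ (2 * h).choose h := by
    have := pow_dvd_choose_of_pow_dvd Fact.out h4 (show h ≤ 2 * h by omega) hN'.symm.dvd
      hN.symm.dvd
    rwa [show (2 * s + 2 + 1) / 2 = s + 1 by omega] at this
  have hchoose : ((2 * h).choose h : ℚ) ^ 2 ∈ padicIdeal p (2 * s + 2) := by
    have h2 := pow_dvd_pow_of_dvd hdvd 2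
    rw [← pow_mul, show (s + 1) * 2 = 2 * s + 2 by ring] at h2
    exact_mod_cast natCast_mem_padicIdeal h2
  have hV := shiftRatio_half_neg_mem_principalUnits hN' (show h ≤ 2 * h by omega)
  have hV0 := ne_zero_of_mem_principalUnits one_ne_zero hV
  have hsq : (risingFactorial (1 / 2) h / h.factorial) ^ 2 = ((2 * h).choose h : ℚ) ^ 2 *
      (shiftRatio (1 / 2) (-(2 * (2 * h : ℕ) + 1) / 2) h ^ 2)⁻¹ := by
    rw [cast_choose_eq_shiftRatio_half, mul_pow, mul_pow, ← pow_mul, Even.neg_one_pow (by simp),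
      one_mul, mul_inv_cancel_right₀ (pow_ne_zero 2 hV0)]
  rw [hsq]
  exact mul_mem_padicIdeal (k := 0) hchoose (mem_padicIdeal_zero_of_sub_one_mem
    (inv_mem_principalUnits one_ne_zero (pow_mem hV 2)))

lemma eight_mul_centralBinom_div_mem {N : ℕ} (hp : p ≠ 2) (hN : N = p ^ n) :
    (8 * N * N.centralBinom / 16 ^ N : ℚ) ∈ padicIdeal p n := by
  have hmem : ((8 * N * N.centralBinom : ℕ) : ℚ) ∈ padicIdeal p (n + 0) :=
    natCast_mem_padicIdeal ((hN.symm.dvd.mul_left 8).mul_right _)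
  have hndvd : ¬ p ^ (0 + 1) ∣ 16 ^ N := by
    rw [zero_add, pow_one, show 16 = 2 ^ 4 by norm_num, ← pow_mul]
    exact fun hdvd => hp ((Nat.prime_dvd_prime_iff_eq Fact.out Nat.prime_two).mp
      ((Fact.out : p.Prime).dvd_of_dvd_pow hdvd))
  exact_mod_cast div_mem_padicIdeal_of_not_dvd hmem hndvd

lemma sum_half_sq_mul_nodeWeight (h : ℕ) :
    ∑ t ∈ range (2 * h + 1), (risingFactorial (1 / 2) t / t.factorial) ^ 2 *
      nodeWeight (2 * (2 * h) + 1) (2 * t) =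
    (risingFactorial (1 / 2) h / h.factorial) ^ 2 * nodeWeight (2 * (2 * h) + 1) (2 * h) +
      8 * (2 * (2 * h) + 1 : ℕ) * (2 * (2 * h) + 1).centralBinom / 16 ^ (2 * (2 * h) + 1) *
        ∑ t ∈ (range (2 * h + 1)).erase h, chooseTerm (2 * h) t * correction (2 * h) t := by
  rw [← add_sum_erase _ _ (mem_range.mpr (show h < 2 * h + 1 by omega)), mul_sum]
  congr 1
  refine sum_congr rfl fun t ht => half_sq_mul_nodeWeight ?_
  have := mem_range.mp (mem_of_mem_erase ht)
  omega

lemma sum_sub_mem_padicIdeal (h4 : p % 4 = 3) (hN : 4 * h + 1 = p ^ (2 * s + 2)) :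
    ∑ k ∈ range (4 * h + 1), risingFactorial (1 / 2) k ^ 3 / (k.factorial : ℚ) ^ 3 -
      (4 * h + 1 : ℕ) * risingFactorial (3 / 4) (2 * h) / risingFactorial (5 / 4) (2 * h) ∈
      padicIdeal p (2 * s + 2 + 2) := by
  have hN' : 2 * (2 * h) + 1 = p ^ (2 * s + 2) := by omega
  obtain ⟨Q, hQ, hrhs⟩ := exists_mul_risingFactorial_div_eq hN
  have hcenter : nodeWeight (2 * (2 * h) + 1) (2 * h) - Q ∈ padicIdeal p 2 := by
    simpa using sub_mem (mem_principalUnits.mp (nodeWeight_center_mem_principalUnits hN'))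
      (mem_principalUnits.mp hQ)
  have hcoeff := eight_mul_centralBinom_div_mem (by rintro rfl; omega) hN'
  have hsplit (w B K T : ℚ) : w * B + K * T - w * Q = w * (B - Q) + K * T := by ring
  rw [hrhs, show 4 * h + 1 = 2 * (2 * h) + 1 by ring, sum_risingFactorial_half_cube,
    sum_half_sq_mul_nodeWeight, hsplit]
  exact add_mem (mul_mem_padicIdeal (risingFactorial_half_center_sq_mem h4 hN) hcenter)
    (mul_mem_padicIdeal hcoeff (sum_chooseTerm_mul_correction_mem h4 hN))

end CentralTerm

/-- For a prime `p ≡ 3 (mod 4)` and `r ≥ 1`,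
`∑_{k=0}^{p^{2r}-1} (1/2)_k^3/k!^3 ≡ p^{2r} (3/4)_{(p^{2r}-1)/2}/(5/4)_{(p^{2r}-1)/2}
(mod p^{2r+2})`. -/
theorem stmt15 (p r : ℕ) (hp : p.Prime) (h : p % 4 = 3) (hr : 1 ≤ r) :
    ∃ a b : ℤ, ¬ ((p : ℤ) ∣ b) ∧
      ((∑ k ∈ Finset.range (p ^ (2 * r)),
          risingFactorial (1/2) k ^ 3 / (k.factorial : ℚ) ^ 3)
        - (p : ℚ) ^ (2 * r) * risingFactorial (3/4) ((p ^ (2 * r) - 1) / 2)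
            / risingFactorial (5/4) ((p ^ (2 * r) - 1) / 2)) * (b : ℚ)
      = (p : ℚ) ^ (2 * r + 2) * (a : ℚ) := by
  have : Fact p.Prime := ⟨hp⟩
  obtain ⟨s, rfl⟩ : ∃ s, r = s + 1 := ⟨r - 1, by omega⟩
  have hmod : p ^ (2 * (s + 1)) % 4 = 1 := pow_mod_four_of_even h (even_two_mul _)
  obtain ⟨c, hc⟩ : ∃ c, p ^ (2 * (s + 1)) = 4 * c + 1 := ⟨p ^ (2 * (s + 1)) / 4, by omega⟩
  have hhalf : (p ^ (2 * (s + 1)) - 1) / 2 = 2 * c := by omega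
  rw [hhalf, ← Nat.cast_pow, hc]
  exact exists_int_mul_eq_of_mem_padicIdeal (sum_sub_mem_padicIdeal h hc.symm)
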